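/- arXiv:1504.06807 — 7 statements merged into one kernel-verified Lean document; each statement's English description precedes it below -/
import Mathlib

section
/- For every nonempty alphabet A, every finite coloring φ : A⁺ → C, and every infinite word x over A, there exists a suffix x' of x which admits a φ-sequentially monochromatic factorization. -/
/-- The first `n` letters of the infinite word `x`, as a finite word. -/
def wordTake {A : Type*} (x : ℕ → A) (n : ℕ) : List A := (List.range n).map x

/-- The finite word `u` is a prefix of the infinite word `x`. -/
def IsPrefixOf {A : Type*} (u : List A) (x : ℕ → A) : Prop := u = wordTake x u.length

/-- The finite word `u` is a (nonempty) factor of the infinite word `x`. -/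
def IsFactorOf {A : Type*} (u : List A) (x : ℕ → A) : Prop :=
  u ≠ [] ∧ ∃ i : ℕ, u = (List.range u.length).map fun k => x (i + k)

/-- `V 0, V 1, V 2, …` is a factorization of the infinite word `x` into nonempty blocks,
i.e. each finite concatenation `V 0 ++ ⋯ ++ V (n-1)` is a prefix of `x`. -/
def IsFactorization {A : Type*} (x : ℕ → A) (V : ℕ → List A) : Prop :=
  (∀ i, V i ≠ []) ∧ ∀ n : ℕ, IsPrefixOf (((List.range n).map V).flatten) x

/-- The concatenation `V i ++ V (i+1) ++ ⋯ ++ V (i+j)` of consecutive blocks. -/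
def blockConcat {A : Type*} (V : ℕ → List A) (i j : ℕ) : List A :=
  ((List.range (j + 1)).map fun t => V (i + t)).flatten

/-- The concatenation `V (n (σ 0)) ++ V (n (σ 1)) ++ ⋯ ++ V (n (σ (k-1)))`. -/
def permConcat {A : Type*} (V : ℕ → List A) {k : ℕ} (n : Fin k → ℕ)
    (σ : Equiv.Perm (Fin k)) : List A :=
  (List.ofFn fun t => V (n (σ t))).flatten

/-- The factorization `V` is `φ`-monochromatic. -/
def IsMonochromatic {A C : Type*} (φ : List A → C) (V : ℕ → List A) : Prop :=
  ∃ c : C, ∀ i, φ (V i) = c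

/-- The factorization `V` is `φ`-sequentially monochromatic. -/
def IsSeqMonochromatic {A C : Type*} (φ : List A → C) (V : ℕ → List A) : Prop :=
  ∃ c : C, ∀ i j : ℕ, φ (blockConcat V i j) = c

/-- The factorization `V` is `φ`-ultra monochromatic. -/
def IsUltraMonochromatic {A C : Type*} (φ : List A → C) (V : ℕ → List A) : Prop :=
  ∃ c : C, ∀ k : ℕ, 1 ≤ k → ∀ n : Fin k → ℕ, StrictMono n →
    ∀ σ : Equiv.Perm (Fin k), φ (permConcat V n σ) = c

/-!
Color each pair `a < b` of positions by the color of the factor `x_a ⋯ x_{b-1}`. Ramsey's theorem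
gives positions `g 0 < g 1 < ⋯` all of whose pairs have the same color `c`. Cut `x` at these
positions: every concatenation of consecutive blocks is again a factor between two of them, so it
has color `c`.
-/

section Ramsey

open Filter

variable {α C : Type*} [Finite C]

theorem exists_eventually_eq_of_ultrafilter (U : Ultrafilter α) (f : α → C) :
    ∃ c, ∀ᶠ a in U, f a = c :=
  Ultrafilter.eventually_exists_iff.1 (.of_forall fun a => ⟨f a, rfl⟩)

/-- Infinite Ramsey theorem for pairs. -/
theorem exists_strictMono_forall_lt_eq [Preorder α] [IsDirectedOrder α] [NoMaxOrder α]
    [Nonempty α] (f : α → α → C) :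
    ∃ c, ∃ g : ℕ → α, StrictMono g ∧ ∀ m n, m < n → f (g m) (g n) = c := by
  let U : Ultrafilter α := .of atTop
  -- `d a` is the color of `(a, b)` for `U`-most `b`, and `d a = c` for `U`-most `a`, so after
  -- finitely many terms with `d a = c`, `U`-most points can serve as the next one.
  choose d hd using fun a => exists_eventually_eq_of_ultrafilter U (f a)
  obtain ⟨c, hc⟩ := exists_eventually_eq_of_ultrafilter U d
  have eventually_gt (a : α) : ∀ᶠ b in U, a < b :=
    (eventually_gt_atTop a).filter_mono (Ultrafilter.of_le atTop)
  have exists_extension (s : Finset α) (hs : ∀ a ∈ s, d a = c) :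
      ∃ b, d b = c ∧ ∀ a ∈ s, a < b ∧ f a b = c := by
    have eventually_extends : ∀ᶠ b in U, ∀ a ∈ s, a < b ∧ f a b = c :=
      (eventually_all_finset s).2 fun a ha => (eventually_gt a).and (hs a ha ▸ hd a)
    exact (hc.and eventually_extends).exists
  obtain ⟨g, -, hg⟩ := exists_seq_of_forall_finset_exists _ _ exists_extension
  exact ⟨c, g, fun m n hmn => (hg m n hmn).1, fun m n hmn => (hg m n hmn).2⟩

end Ramsey

section Blocks

variable {A : Type*}

/-- The factor `x_a x_{a+1} ⋯ x_{b-1}` of the infinite word `x`; it is empty when `b ≤ a`. -/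
def factorIco (x : ℕ → A) (a b : ℕ) : List A := (List.Ico a b).map x

theorem factorIco_self (x : ℕ → A) (a : ℕ) : factorIco x a a = [] := by
  simp [factorIco]

theorem length_factorIco (x : ℕ → A) (a b : ℕ) : (factorIco x a b).length = b - a := by
  simp [factorIco]

theorem factorIco_ne_nil (x : ℕ → A) {a b : ℕ} (hab : a < b) : factorIco x a b ≠ [] := by
  simpa [factorIco] using hab

theorem factorIco_append_factorIco (x : ℕ → A) {a b c : ℕ} (hab : a ≤ b) (hbc : b ≤ c) :
    factorIco x a b ++ factorIco x b c = factorIco x a c := by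
  simp only [factorIco, ← List.map_append, List.Ico.append_consecutive hab hbc]

theorem isPrefixOf_factorIco (x : ℕ → A) (a b : ℕ) :
    IsPrefixOf (factorIco x a b) (fun m => x (a + m)) := by
  rw [IsPrefixOf, length_factorIco, factorIco, List.Ico, List.range'_eq_map_range, List.map_map]
  rfl

/-- The blocks obtained by cutting the infinite word `x` at the positions `g 0, g 1, …`. The letters
before position `g 0` belong to no block. -/
def cutBlocks (x : ℕ → A) (g : ℕ → ℕ) (i : ℕ) : List A := factorIco x (g i) (g (i + 1))

theorem flatten_map_cutBlocks (x : ℕ → A) {g : ℕ → ℕ} (hg : Monotone g) (i n : ℕ) :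
    ((List.range n).map fun t => cutBlocks x g (i + t)).flatten =
      factorIco x (g i) (g (i + n)) := by
  induction n with
  | zero => simp [factorIco_self]
  | succ n ih =>
    rw [List.range_succ, List.map_append, List.flatten_append, ih, List.map_singleton,
      List.flatten_singleton, cutBlocks]
    exact factorIco_append_factorIco x (hg (by lia)) (hg (by lia))

theorem blockConcat_cutBlocks (x : ℕ → A) {g : ℕ → ℕ} (hg : Monotone g) (i j : ℕ) :
    blockConcat (cutBlocks x g) i j = factorIco x (g i) (g (i + (j + 1))) :=
  flatten_map_cutBlocks x hg i (j + 1)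

theorem isFactorization_cutBlocks (x : ℕ → A) {g : ℕ → ℕ} (hg : StrictMono g) :
    IsFactorization (fun m => x (g 0 + m)) (cutBlocks x g) := by
  refine ⟨fun i => factorIco_ne_nil x (hg i.lt_succ_self), fun n => ?_⟩
  have flatten_eq : ((List.range n).map (cutBlocks x g)).flatten = factorIco x (g 0) (g n) := by
    simpa only [Nat.zero_add] using flatten_map_cutBlocks x hg.monotone 0 n
  exact flatten_eq ▸ isPrefixOf_factorIco x (g 0) (g n)

end Blocks

/-- For every nonempty alphabet, every finite coloring of nonempty finite
words, and every infinite word `x`, some suffix of `x` admits a `φ`-sequentially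
monochromatic factorization. -/
theorem suffix_admits_seq_monochromatic_factorization
    {A C : Type*} [Nonempty A] [Fintype C] [Nonempty C]
    (φ : List A → C) (x : ℕ → A) :
    ∃ n : ℕ, ∃ V : ℕ → List A,
      IsFactorization (fun m => x (n + m)) V ∧ IsSeqMonochromatic φ V := by
  obtain ⟨c, g, hg, hc⟩ := exists_strictMono_forall_lt_eq fun a b => φ (factorIco x a b)
  refine ⟨g 0, cutBlocks x g, isFactorization_cutBlocks x hg, c, fun i j => ?_⟩
  rw [blockConcat_cutBlocks x hg.monotone]
  exact hc i (i + (j + 1)) (by lia)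
end

section
/- Suppose that for every finite coloring φ : {0,1}⁺ → C and every infinite binary word x there exists a suffix of x which admits a φ-sequentially monochromatic factorization. Then the infinite Ramsey theorem for pairs holds: for every finite coloring φ of the 2-element subsets of ℕ by a finite nonempty set C, there exist c ∈ C and an infinite set 𝒩 ⊆ ℕ such that every 2-element subset of 𝒩 has color c. -/
/-!
Let `x` be a word whose suffixes are pairwise distinct, i.e. which is not eventually periodic, such
as the characteristic word of the squares. A factor of `x` that starts at `a` and is long enough
does not start at any earlier position, so the word itself determines both `a` and its end point
`b`. Hence a coloring of pairs induces a coloring of words under which, for each `a` and all large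
`b`, the factor `x_a ⋯ x_{b-1}` has the color of `{a, b}`. The cut points of a sequentially
monochromatic factorization of a suffix, thinned out so that consecutive ones are far enough apart,
then form a monochromatic set.
-/

open Filter Function

section Words

variable {A : Type*} {x y : ℕ → A}

/-- The suffix `Tⁿ(x)` of the infinite word `x`. -/
def wordDrop (x : ℕ → A) (n : ℕ) : ℕ → A := fun k => x (n + k)

lemma wordDrop_wordDrop (x : ℕ → A) (m n : ℕ) :
    wordDrop (wordDrop x m) n = wordDrop x (m + n) := by
  funext k
  simp only [wordDrop, add_assoc]

lemma length_wordTake (x : ℕ → A) (n : ℕ) : (wordTake x n).length = n := by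
  simp only [wordTake, List.length_map, List.length_range]

lemma isPrefixOf_wordTake (x : ℕ → A) (n : ℕ) : IsPrefixOf (wordTake x n) x := by
  rw [IsPrefixOf, length_wordTake]

lemma wordTake_add (x : ℕ → A) (m n : ℕ) :
    wordTake x (m + n) = wordTake x m ++ wordTake (wordDrop x m) n := by
  rw [wordTake, List.range_add, List.map_append, List.map_map]
  rfl

lemma IsPrefixOf.of_append {u v : List A} (hu : IsPrefixOf u x) (huv : IsPrefixOf (u ++ v) x) :
    IsPrefixOf v (wordDrop x u.length) := by
  rw [IsPrefixOf, List.length_append, wordTake_add, ← hu] at huv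
  exact List.append_cancel_left huv

lemma eventually_wordTake_ne (hxy : x ≠ y) : ∀ᶠ n in atTop, wordTake x n ≠ wordTake y n := by
  obtain ⟨k, hk⟩ := Function.ne_iff.1 hxy
  filter_upwards [eventually_gt_atTop k] with n hn heq
  exact hk (List.map_inj_left.1 heq k (List.mem_range.2 hn))

end Words

section Factorizations

variable {A : Type*} {x : ℕ → A} {V : ℕ → List A}

/-- The length of `V 0 ++ ⋯ ++ V (i-1)`: the position `nᵢ` at which the block `V i` starts in a
word factorized by `V`. -/
def cutPoint (V : ℕ → List A) (i : ℕ) : ℕ := ((List.range i).map V).flatten.length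

lemma strictMono_cutPoint (hV : ∀ i, V i ≠ []) : StrictMono (cutPoint V) :=
  strictMono_nat_of_lt_succ fun i => by
    simpa [cutPoint, List.range_succ] using List.length_pos_iff.2 (hV i)

lemma flatten_append_blockConcat (V : ℕ → List A) (i j : ℕ) :
    ((List.range i).map V).flatten ++ blockConcat V i j =
      ((List.range (i + (j + 1))).map V).flatten := by
  rw [List.range_add, List.map_append, List.flatten_append, List.map_map]
  rfl

lemma cutPoint_add_length_blockConcat (V : ℕ → List A) (i j : ℕ) :
    cutPoint V i + (blockConcat V i j).length = cutPoint V (i + (j + 1)) := by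
  rw [cutPoint, cutPoint, ← flatten_append_blockConcat, List.length_append]

lemma IsFactorization.isPrefixOf_blockConcat (hV : IsFactorization x V) (i j : ℕ) :
    IsPrefixOf (blockConcat V i j) (wordDrop x (cutPoint V i)) :=
  (hV.2 i).of_append (flatten_append_blockConcat V i j ▸ hV.2 (i + (j + 1)))

lemma IsFactorization.exists_blockConcat_eq (hV : IsFactorization x V) {i k : ℕ} (hik : i < k) :
    ∃ j, blockConcat V i j =
      wordTake (wordDrop x (cutPoint V i)) (cutPoint V k - cutPoint V i) := by
  obtain ⟨j, rfl⟩ := Nat.exists_eq_add_of_lt hik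
  refine ⟨j, ?_⟩
  rw [add_assoc, ← cutPoint_add_length_blockConcat, Nat.add_sub_cancel_left]
  exact hV.isPrefixOf_blockConcat i j

end Factorizations

section FactorColoring

variable {A C : Type*} {x : ℕ → A}

/-- The first position at which the finite word `u` occurs in `x`, and `0` if it does not occur. -/
noncomputable def firstOccurrence (x : ℕ → A) (u : List A) : ℕ :=
  sInf {a | IsPrefixOf u (wordDrop x a)}

/-- The coloring of finite words induced by a coloring `φ` of pairs: a factor of `x` gets the color
of the two end points of its first occurrence. Words that do not occur in `x` get an irrelevant
color. -/
noncomputable def factorColoring (x : ℕ → A) (φ : Finset ℕ → C) (u : List A) : C :=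
  φ {firstOccurrence x u, firstOccurrence x u + u.length}

lemma eventually_firstOccurrence_wordTake (hx : Injective (wordDrop x)) (a : ℕ) :
    ∀ᶠ n in atTop, firstOccurrence x (wordTake (wordDrop x a) n) = a := by
  have no_earlier : ∀ᶠ n in atTop, ∀ b ∈ Set.Iio a,
      wordTake (wordDrop x a) n ≠ wordTake (wordDrop x b) n :=
    (Set.finite_Iio a).eventually_all.2 fun b hb => eventually_wordTake_ne (hx.ne hb.ne')
  filter_upwards [no_earlier] with n hn
  refine IsLeast.csInf_eq ⟨isPrefixOf_wordTake _ n, fun b hb => ?_⟩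
  rw [Set.mem_ofPred_eq, IsPrefixOf, length_wordTake] at hb
  exact not_lt.1 fun hba => hn b hba hb

lemma eventually_factorColoring_wordTake (hx : Injective (wordDrop x)) (φ : Finset ℕ → C)
    (a : ℕ) : ∀ᶠ b in atTop, factorColoring x φ (wordTake (wordDrop x a) (b - a)) = φ {a, b} := by
  filter_upwards [(tendsto_sub_atTop_nat a).eventually (eventually_firstOccurrence_wordTake hx a),
    eventually_ge_atTop a] with b hfirst hab
  rw [factorColoring, hfirst, length_wordTake, Nat.add_sub_cancel' hab]

lemma IsFactorization.eventually_color_cutPoint_eq (hx : Injective (wordDrop x))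
    {φ : Finset ℕ → C} {n : ℕ} {V : ℕ → List A} (hV : IsFactorization (wordDrop x n) V) {c : C}
    (hc : ∀ i j, factorColoring x φ (blockConcat V i j) = c) (i : ℕ) :
    ∀ᶠ k in atTop, φ {n + cutPoint V i, n + cutPoint V k} = c := by
  have cut_tendsto : Tendsto (fun k => n + cutPoint V k) atTop atTop :=
    ((strictMono_cutPoint hV.1).const_add n).tendsto_atTop
  filter_upwards [eventually_gt_atTop i,
    cut_tendsto.eventually (eventually_factorColoring_wordTake hx φ (n + cutPoint V i))]
    with k hik hcolor
  obtain ⟨j, hj⟩ := hV.exists_blockConcat_eq hik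
  rw [← hcolor, Nat.add_sub_add_left, ← wordDrop_wordDrop, ← hj, hc]

end FactorColoring

section Thinning

lemma exists_strictMono_forall_lt_of_eventually {α : Type*} [Preorder α] [IsDirectedOrder α]
    [Nonempty α] [NoMaxOrder α] {r : α → α → Prop} (hr : ∀ a, ∀ᶠ b in atTop, r a b) :
    ∃ f : ℕ → α, StrictMono f ∧ ∀ k l, k < l → r (f k) (f l) := by
  obtain ⟨f, -, hf⟩ := exists_seq_of_forall_finset_exists (fun _ => True)
    (fun a b => a < b ∧ r a b) fun s _ => by
      have : ∀ᶠ b in atTop, ∀ a ∈ s, a < b ∧ r a b :=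
        (eventually_all_finset s).2 fun a _ => (eventually_gt_atTop a).and (hr a)
      exact this.exists.imp fun b hb => ⟨trivial, hb⟩
  exact ⟨f, fun k l hkl => (hf k l hkl).1, fun k l hkl => (hf k l hkl).2⟩

lemma color_eq_of_card_eq_two_of_subset_range {ι α C : Type*} [LinearOrder ι] [DecidableEq α]
    {φ : Finset α → C} {c : C} {q : ι → α} (hq : ∀ k l, k < l → φ {q k, q l} = c)
    {s : Finset α} (hs : s.card = 2) (hsq : ↑s ⊆ Set.range q) : φ s = c := by
  obtain ⟨a, b, hab, rfl⟩ := Finset.card_eq_two.1 hs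
  obtain ⟨⟨k, rfl⟩, l, rfl⟩ : a ∈ Set.range q ∧ b ∈ Set.range q := by
    simpa only [Finset.coe_pair, Set.pair_subset_iff] using hsq
  rcases lt_or_gt_of_ne (ne_of_apply_ne q hab) with hkl | hlk
  · exact hq k l hkl
  · rw [Finset.pair_comm, hq l k hlk]

end Thinning

/-- The characteristic word of the set of squares, an infinite binary word that is not eventually
periodic because the gaps between consecutive squares are unbounded. -/
def squareWord : ℕ → Bool := fun n => decide (IsSquare n)

lemma injective_wordDrop_squareWord : Injective (wordDrop squareWord) := by
  refine .of_lt_imp_ne fun a b hab heq => ?_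
  -- A period `b - a` valid from `a` on would carry the square `b * b` to the non-square
  -- `b * b + (b - a)`.
  have hbb : b ≤ b * b := Nat.le_mul_self b
  have hperiod : IsSquare (a + (b * b - a)) ↔ IsSquare (b + (b * b - a)) :=
    decide_eq_decide.1 (congrFun heq (b * b - a))
  rw [Nat.add_sub_cancel' (hab.le.trans hbb)] at hperiod
  obtain ⟨t, ht⟩ := hperiod.1 ⟨b, rfl⟩
  exact Nat.not_exists_sq (m := b) (n := b + (b * b - a)) (by omega) (by grind) ⟨t, ht.symm⟩

theorem seq_monochromatic_implies_ramsey_pairs_general {A C : Type*} {x : ℕ → A}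
    (hx : Injective (wordDrop x))
    (h : ∀ φ : List A → C, ∃ n : ℕ, ∃ V : ℕ → List A,
      IsFactorization (wordDrop x n) V ∧ IsSeqMonochromatic φ V)
    (φ : Finset ℕ → C) :
    ∃ c : C, ∃ N : Set ℕ, N.Infinite ∧ ∀ s : Finset ℕ, s.card = 2 → ↑s ⊆ N → φ s = c := by
  obtain ⟨n, V, hV, c, hc⟩ := h (factorColoring x φ)
  obtain ⟨f, hf, hfc⟩ :=
    exists_strictMono_forall_lt_of_eventually (hV.eventually_color_cutPoint_eq hx hc)
  have hmono : StrictMono fun k => n + cutPoint V (f k) :=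
    ((strictMono_cutPoint hV.1).comp hf).const_add n
  exact ⟨c, _, Set.infinite_range_of_injective hmono.injective,
    fun s hs hsub => color_eq_of_card_eq_two_of_subset_range hfc hs hsub⟩

/-- If every infinite binary word has a suffix admitting a sequentially
monochromatic factorization for every finite coloring, then the infinite Ramsey theorem
for pairs holds. -/
theorem seq_monochromatic_implies_ramsey_pairs
    (h : ∀ (C : Type) [Fintype C] [Nonempty C] (φ : List Bool → C) (x : ℕ → Bool),
      ∃ n : ℕ, ∃ V : ℕ → List Bool,
        IsFactorization (fun m => x (n + m)) V ∧ IsSeqMonochromatic φ V) :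
    ∀ (C : Type) [Fintype C] [Nonempty C] (φ : Finset ℕ → C),
      ∃ c : C, ∃ N : Set ℕ, N.Infinite ∧
        ∀ s : Finset ℕ, s.card = 2 → ↑s ⊆ N → φ s = c := by
  intro C _ _
  exact seq_monochromatic_implies_ramsey_pairs_general injective_wordDrop_squareWord
    fun φ => h C φ squareWord
end

section
/- Let r ≥ 1 and let x be an r-power free Sturmian word over {0,1}. Then for every infinite sequence V₀, V₁, V₂, ⋯ of nonempty finite binary words there exist k ≥ 1, indices 0 ≤ n₁ < n₂ < ⋯ < n_k, and a permutation σ of {1,2,…,k} such that the concatenation V_{n_σ(1)} V_{n_σ(2)} ⋯ V_{n_σ(k)} is not a factor of x. -/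
/-- The infinite word `x` is ultimately periodic. -/
def IsUltimatelyPeriodic {A : Type*} (x : ℕ → A) : Prop :=
  ∃ n p : ℕ, 0 < p ∧ ∀ k : ℕ, x (n + k + p) = x (n + k)

/-- The infinite binary word `x` is balanced. -/
def IsBalanced (x : ℕ → Bool) : Prop :=
  ∀ u v : List Bool, IsFactorOf u x → IsFactorOf v x → u.length = v.length →
    ∀ a : Bool, |(u.count a : ℤ) - (v.count a : ℤ)| ≤ 1

/-- The infinite binary word `x` is Sturmian: aperiodic and balanced. -/
def IsSturmian (x : ℕ → Bool) : Prop := ¬ IsUltimatelyPeriodic x ∧ IsBalanced x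

/-- The infinite word `x` is `r`-power free: for no factor `u` of `x` is `u^r` a factor. -/
def IsPowerFree {A : Type*} (r : ℕ) (x : ℕ → A) : Prop :=
  ∀ u : List A, IsFactorOf u x → ¬ IsFactorOf ((List.replicate r u).flatten) x

/-!
In a balanced binary word any two left special factors are comparable for the prefix order. If
`s ++ w` is a prefix of `s' ++ w` with `s` shorter than `s'`, then `w` is a prefix of `t ++ w`,
where `t` is `s'` without its first `|s|` letters; hence `w` begins with a high power of `t` as
soon as it is long compared to `t`. So in a balanced power free word a factor `w` has at most two
left extensions of any given length that is small compared to `|w|`.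

If all permuted concatenations of the `V i` were factors, then by power freeness each word would
occur only finitely often among the `V i`, so `|V i|` would tend to infinity. For `1 < n < m` with
`|V n|` and then `|V m|` large enough, `V m` would have the three left extensions `V 0 V 1 V n`,
`V 0 V n V 1`, `V n V 0 V 1`. These are distinct, because `V 0`, `V 1` and `V 0 V 1` do not commute
with `V n`, again by power freeness.
-/

open Filter

section Words

variable {A : Type*} {x : ℕ → A} {u v w : List A} {r : ℕ}

theorem exists_append_cons_of_ne_of_length_eq (hne : u ≠ v) (hlen : u.length = v.length) :
    ∃ (p : List A) (a b : A) (u' v' : List A), a ≠ b ∧ u = p ++ a :: u' ∧ v = p ++ b :: v' := by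
  induction u generalizing v with
  | nil => exact absurd (List.length_eq_zero_iff.1 hlen.symm).symm hne
  | cons a u ih =>
    obtain _ | ⟨b, v⟩ := v
    · simp at hlen
    by_cases hab : a = b
    · subst hab
      obtain ⟨p, c, d, u', v', hcd, rfl, rfl⟩ := ih (by simpa using hne) (by simpa using hlen)
      exact ⟨a :: p, c, d, u', v', hcd, rfl, rfl⟩
    · exact ⟨[], a, b, u, v, hab, rfl, rfl⟩

theorem exists_cons_append_of_ne_of_length_eq (hne : u ≠ v) (hlen : u.length = v.length) :
    ∃ (s : List A) (a b : A) (u' v' : List A), a ≠ b ∧ u = u' ++ a :: s ∧ v = v' ++ b :: s := by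
  obtain ⟨p, a, b, u', v', hab, hu, hv⟩ := exists_append_cons_of_ne_of_length_eq
    (List.reverse_injective.ne hne) (by simpa using hlen)
  refine ⟨p.reverse, a, b, u'.reverse, v'.reverse, hab, ?_, ?_⟩
  · simpa using congrArg List.reverse hu
  · simpa using congrArg List.reverse hv

theorem flatten_replicate_isPrefix_of_isPrefix_append {t : List A} (h : w <+: t ++ w)
    (hlen : r * t.length ≤ w.length) : (List.replicate r t).flatten <+: w := by
  induction r with
  | zero => simp
  | succ r ih =>
    rw [Nat.succ_mul] at hlen
    have hprefix : (List.replicate (r + 1) t).flatten <+: t ++ w := by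
      simpa [List.replicate_succ] using ih (by lia)
    exact List.prefix_of_prefix_length_le hprefix h (by simp; lia)

theorem IsFactorOf.of_isInfix (hu : IsFactorOf u x) (h : v <:+: u) (hv : v ≠ []) :
    IsFactorOf v x := by
  obtain ⟨p, s, rfl⟩ := h
  obtain ⟨-, i, hi⟩ := hu
  refine ⟨hv, i + p.length, List.ext_getElem (by simp) fun k hk _ => ?_⟩
  have hletter := congrArg (·[p.length + k]?) hi
  simpa [List.getElem?_append, hk, Nat.add_assoc,
    show k < v.length + s.length by lia] using hletter

theorem IsPowerFree.not_isPrefix_append {t : List A} (hpf : IsPowerFree r x) (hr : 1 ≤ r)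
    (hw : IsFactorOf w x) (ht : t ≠ []) (hlen : r * t.length ≤ w.length) : ¬ w <+: t ++ w := by
  intro h
  have hpow : IsFactorOf (List.replicate r t).flatten x :=
    hw.of_isInfix (flatten_replicate_isPrefix_of_isPrefix_append h hlen).isInfix
      (by simp [ht]; lia)
  refine hpf t (hpow.of_isInfix ?_ ht) hpow
  exact List.infix_of_mem_flatten (by simp; lia)

theorem IsPowerFree.append_ne_append_swap (hpf : IsPowerFree r x) (hr : 1 ≤ r)
    (hw : IsFactorOf w x) (hv : v ≠ []) (hlen : r * v.length ≤ w.length) : v ++ w ≠ w ++ v :=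
  fun h => hpf.not_isPrefix_append hr hw hv hlen (h ▸ List.prefix_append w v)

end Words

section LeftSpecial

/-- The word `u` is left special in `x`: it extends to the left by two different letters within the
factors of `x`. The empty word is allowed. -/
def IsLeftSpecial {A : Type*} (u : List A) (x : ℕ → A) : Prop :=
  ∃ a b : A, a ≠ b ∧ IsFactorOf (a :: u) x ∧ IsFactorOf (b :: u) x

theorem IsLeftSpecial.of_isPrefix {A : Type*} {x : ℕ → A} {u v : List A} (hu : IsLeftSpecial u x)
    (h : v <+: u) : IsLeftSpecial v x := by
  obtain ⟨a, b, hab, ha, hb⟩ := hu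
  have hcons (c : A) : c :: v <:+: c :: u := (List.cons_prefix_cons.2 ⟨rfl, h⟩).isInfix
  exact ⟨a, b, hab, ha.of_isInfix (hcons a) (by simp), hb.of_isInfix (hcons b) (by simp)⟩

theorem exists_isLeftSpecial_append {A : Type*} {x : ℕ → A} {u v w : List A} (hne : u ≠ v)
    (hlen : u.length = v.length) (hu : IsFactorOf (u ++ w) x) (hv : IsFactorOf (v ++ w) x) :
    ∃ (s : List A) (a b : A), a ≠ b ∧ a :: s <:+ u ∧ b :: s <:+ v ∧ IsLeftSpecial (s ++ w) x := by
  obtain ⟨s, a, b, u', v', hab, rfl, rfl⟩ := exists_cons_append_of_ne_of_length_eq hne hlen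
  exact ⟨s, a, b, hab, List.suffix_append _ _, List.suffix_append _ _, a, b, hab,
    hu.of_isInfix ⟨u', [], by simp⟩ (by simp), hv.of_isInfix ⟨v', [], by simp⟩ (by simp)⟩

theorem bool_eq_or_eq_of_ne : ∀ {a b : Bool}, a ≠ b → ∀ c : Bool, c = a ∨ c = b := by decide

variable {x : ℕ → Bool} {u v : List Bool} {r : ℕ}

theorem IsLeftSpecial.isFactorOf_cons (hu : IsLeftSpecial u x) (c : Bool) :
    IsFactorOf (c :: u) x := by
  obtain ⟨a, b, hab, ha, hb⟩ := hu
  obtain rfl | rfl := bool_eq_or_eq_of_ne hab c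
  exacts [ha, hb]

theorem IsBalanced.eq_of_isLeftSpecial_of_length_eq (hx : IsBalanced x) (hu : IsLeftSpecial u x)
    (hv : IsLeftSpecial v x) (hlen : u.length = v.length) : u = v := by
  by_contra hne
  obtain ⟨p, a, b, u', v', hab, rfl, rfl⟩ := exists_append_cons_of_ne_of_length_eq hne hlen
  have ha : IsFactorOf (a :: (p ++ [a])) x :=
    (hu.isFactorOf_cons a).of_isInfix ⟨[], u', by simp⟩ (by simp)
  have hb : IsFactorOf (b :: (p ++ [b])) x :=
    (hv.isFactorOf_cons b).of_isInfix ⟨[], v', by simp⟩ (by simp)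
  have hcount := hx _ _ ha hb (by simp) a
  simp only [List.count_cons, List.count_append, List.count_nil, beq_iff_eq, hab.symm] at hcount
  grind

theorem IsBalanced.isPrefix_of_isLeftSpecial (hx : IsBalanced x) (hu : IsLeftSpecial u x)
    (hv : IsLeftSpecial v x) (hlen : u.length ≤ v.length) : u <+: v := by
  have heq : u = v.take u.length := hx.eq_of_isLeftSpecial_of_length_eq hu
    (hv.of_isPrefix (List.take_prefix _ _)) (by simpa using hlen)
  exact heq ▸ List.take_prefix _ _

variable {s s' w : List Bool}

theorem IsBalanced.length_le_of_isLeftSpecial_append (hx : IsBalanced x) (hpf : IsPowerFree r x)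
    (hr : 1 ≤ r) (hs : IsLeftSpecial (s ++ w) x) (hs' : IsLeftSpecial (s' ++ w) x)
    (hlen : r * s'.length ≤ w.length) : s'.length ≤ s.length := by
  by_contra! hlt
  have hprefix : s ++ w <+: s' ++ w := hx.isPrefix_of_isLeftSpecial hs hs' (by simpa using hlt.le)
  have hwne : w ≠ [] := by
    rintro rfl
    have hpos : 0 < r * s'.length := Nat.mul_pos hr (by lia)
    exact hpos.not_ge hlen
  have hw : IsFactorOf w x :=
    (hs.isFactorOf_cons false).of_isInfix (List.suffix_append (false :: s) w).isInfix hwne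
  obtain ⟨t, rfl⟩ : s <+: s' := List.prefix_of_prefix_length_le
    ((List.prefix_append s w).trans hprefix) (List.prefix_append s' w) hlt.le
  have ht : t ≠ [] := by
    rintro rfl
    simp at hlt
  refine hpf.not_isPrefix_append hr hw ht (le_trans ?_ hlen) (by simpa using hprefix)
  exact Nat.mul_le_mul_left r (by simp)

theorem IsBalanced.eq_of_isLeftSpecial_append (hx : IsBalanced x) (hpf : IsPowerFree r x)
    (hr : 1 ≤ r) (hs : IsLeftSpecial (s ++ w) x) (hs' : IsLeftSpecial (s' ++ w) x)
    (hlen : r * s.length ≤ w.length) (hlen' : r * s'.length ≤ w.length) : s = s' := by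
  have hle := hx.length_le_of_isLeftSpecial_append hpf hr hs' hs hlen
  have hge := hx.length_le_of_isLeftSpecial_append hpf hr hs hs' hlen'
  have happend : s ++ w = s' ++ w :=
    hx.eq_of_isLeftSpecial_of_length_eq hs hs' (by simpa using hle.antisymm hge)
  exact List.append_cancel_right happend

theorem IsBalanced.eq_or_eq_or_eq_of_isFactorOf_append {u₁ u₂ u₃ : List Bool} (hx : IsBalanced x)
    (hpf : IsPowerFree r x) (hr : 1 ≤ r) (hlen : r * u₁.length ≤ w.length)
    (h₁₂ : u₁.length = u₂.length) (h₁₃ : u₁.length = u₃.length) (h₁ : IsFactorOf (u₁ ++ w) x)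
    (h₂ : IsFactorOf (u₂ ++ w) x) (h₃ : IsFactorOf (u₃ ++ w) x) :
    u₁ = u₂ ∨ u₁ = u₃ ∨ u₂ = u₃ := by
  by_contra! hne
  obtain ⟨s, a₁, a₂, ha, ha₁, ha₂, hs⟩ := exists_isLeftSpecial_append hne.1 h₁₂ h₁ h₂
  obtain ⟨s', b₁, b₃, hb, hb₁, hb₃, hs'⟩ := exists_isLeftSpecial_append hne.2.1 h₁₃ h₁ h₃
  obtain ⟨s'', c₂, c₃, hc, hc₂, hc₃, hs''⟩ :=
    exists_isLeftSpecial_append hne.2.2 (h₁₂.symm.trans h₁₃) h₂ h₃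
  have hbound {a : Bool} {t u : List Bool} (h : a :: t <:+ u) (hu : u₁.length = u.length) :
      r * t.length ≤ w.length :=
    (Nat.mul_le_mul_left r (by grind [h.length_le])).trans hlen
  obtain rfl : s = s' :=
    hx.eq_of_isLeftSpecial_append hpf hr hs hs' (hbound ha₁ rfl) (hbound hb₁ rfl)
  obtain rfl : s = s'' :=
    hx.eq_of_isLeftSpecial_append hpf hr hs hs'' (hbound ha₁ rfl) (hbound hc₂ h₁₂)
  have hletter {a b : Bool} {u : List Bool} (h : a :: s <:+ u) (h' : b :: s <:+ u) : a = b :=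
    (List.cons.inj ((List.suffix_of_suffix_length_le h h' (by simp)).eq_of_length (by simp))).1
  obtain rfl := hletter ha₁ hb₁
  obtain rfl := hletter ha₂ hc₂
  obtain rfl := hletter hb₃ hc₃
  obtain h | h := bool_eq_or_eq_of_ne ha b₃
  exacts [hb h.symm, hc h.symm]

theorem IsBalanced.not_isFactorOf_append_of_isFactorOf_append {a b c : List Bool}
    (hx : IsBalanced x) (hpf : IsPowerFree r x) (hr : 1 ≤ r) (ha : a ≠ []) (hb : b ≠ [])
    (hc : r * (a ++ b).length ≤ c.length) (hw : r * (a ++ b ++ c).length ≤ w.length)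
    (habc : IsFactorOf (a ++ b ++ c ++ w) x) (hacb : IsFactorOf (a ++ c ++ b ++ w) x) :
    ¬ IsFactorOf (c ++ (a ++ b) ++ w) x := by
  intro hcab
  have hcne : c ≠ [] := by
    rintro rfl
    have hpos : 0 < r * (a ++ b).length := Nat.mul_pos hr (List.length_pos_iff.2 (by simp [ha]))
    exact hpos.not_ge hc
  have hcfac : IsFactorOf c x := habc.of_isInfix ⟨a ++ b, w, rfl⟩ hcne
  have hncomm {v : List Bool} (hv : v ≠ []) (hle : v.length ≤ (a ++ b).length) :
      v ++ c ≠ c ++ v :=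
    hpf.append_ne_append_swap hr hcfac hv ((Nat.mul_le_mul_left r hle).trans hc)
  obtain h | h | h := hx.eq_or_eq_or_eq_of_isFactorOf_append hpf hr hw (by simp; lia)
    (by simp; lia) habc hacb hcab
  · exact hncomm hb (by simp) (by simpa using h)
  · exact hncomm (by simp [ha]) le_rfl h
  · exact hncomm ha (by simp) (by simpa [← List.append_assoc] using h)

end LeftSpecial

section Concatenations

variable {A : Type*} {x : ℕ → A} {r : ℕ}

theorem exists_permConcat_eq_flatten_map (V : ℕ → List A) {l : List ℕ} (hl : l.Nodup) :
    ∃ n : Fin l.length → ℕ, StrictMono n ∧ ∃ σ : Equiv.Perm (Fin l.length),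
      permConcat V n σ = (l.map V).flatten := by
  have hmono : StrictMono (l.get ∘ Tuple.sort l.get) :=
    (Tuple.monotone_sort l.get).strictMono_of_injective
      ((List.nodup_iff_injective_get.1 hl).comp (Tuple.sort l.get).injective)
  refine ⟨l.get ∘ Tuple.sort l.get, hmono, (Tuple.sort l.get)⁻¹, ?_⟩
  simp [permConcat]

variable {V : ℕ → List A}

theorem IsPowerFree.finite_preimage_singleton (hpf : IsPowerFree r x) (hr : 1 ≤ r)
    (hfac : ∀ l : List ℕ, l ≠ [] → l.Nodup → IsFactorOf (l.map V).flatten x) (u : List A) :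
    (V ⁻¹' {u}).Finite := by
  by_contra hinf
  obtain ⟨t, ht, hcard⟩ := Set.Infinite.exists_subset_card_eq hinf r
  have hmap : t.toList.map V = List.replicate r u :=
    List.eq_replicate_iff.2 ⟨by simpa using hcard, by simpa using fun i hi => ht hi⟩
  have htne : t.Nonempty := Finset.card_pos.1 (by lia)
  have hu : IsFactorOf u x := by
    obtain ⟨i, hi⟩ := htne
    simpa [show V i = u from ht hi] using hfac [i] (by simp) (by simp)
  exact hpf u hu (hmap ▸ hfac t.toList (by simpa using htne.ne_empty) t.nodup_toList)

theorem tendsto_length_cofinite_atTop [Finite A] :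
    Tendsto (List.length : List A → ℕ) cofinite atTop :=
  tendsto_atTop.2 fun N => by simpa using List.finite_length_lt A N

theorem IsPowerFree.tendsto_length_atTop [Finite A] (hpf : IsPowerFree r x) (hr : 1 ≤ r)
    (hfac : ∀ l : List ℕ, l ≠ [] → l.Nodup → IsFactorOf (l.map V).flatten x) :
    Tendsto (fun n => (V n).length) atTop atTop := by
  have hcofinite : Tendsto V cofinite cofinite :=
    .cofinite_of_finite_preimage_singleton (hpf.finite_preimage_singleton hr hfac)
  exact tendsto_length_cofinite_atTop.comp (Nat.cofinite_eq_atTop ▸ hcofinite)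

end Concatenations

/-- If `x` is an `r`-power free Sturmian word, then for every infinite
sequence of nonempty finite binary words some permuted concatenation of finitely many of
them fails to be a factor of `x`. -/
theorem sturmian_perm_concat_not_factor
    (r : ℕ) (hr : 1 ≤ r) (x : ℕ → Bool) (hx : IsSturmian x) (hpf : IsPowerFree r x)
    (V : ℕ → List Bool) (hV : ∀ i, V i ≠ []) :
    ∃ k : ℕ, 1 ≤ k ∧ ∃ n : Fin k → ℕ, StrictMono n ∧ ∃ σ : Equiv.Perm (Fin k),
      ¬ IsFactorOf (permConcat V n σ) x := by
  by_contra! hcon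
  have hfac (l : List ℕ) (hne : l ≠ []) (hl : l.Nodup) : IsFactorOf (l.map V).flatten x := by
    obtain ⟨n, hn, σ, hσ⟩ := exists_permConcat_eq_flatten_map V hl
    exact hσ ▸ hcon _ (List.length_pos_iff.2 hne) n hn σ
  have hlarge (N M : ℕ) : ∃ n, N ≤ (V n).length ∧ M < n :=
    (((hpf.tendsto_length_atTop hr hfac).eventually_ge_atTop N).and (eventually_gt_atTop M)).exists
  obtain ⟨n, hlen, hn⟩ := hlarge (r * (V 0 ++ V 1).length) 1
  obtain ⟨m, hlen', hm⟩ := hlarge (r * (V 0 ++ V 1 ++ V n).length) n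
  refine hx.2.not_isFactorOf_append_of_isFactorOf_append hpf hr (hV 0) (hV 1) hlen hlen' ?_ ?_ ?_
  · simpa using hfac [0, 1, n, m] (by simp) (by simp; lia)
  · simpa using hfac [0, n, 1, m] (by simp) (by simp; lia)
  · simpa using hfac [n, 0, 1, m] (by simp) (by simp; lia)
end

section
/- Let r ≥ 1 and let x be an r-power free Sturmian word over {0,1}. Define φ : {0,1}⁺ → {0,1} by φ(u) = 0 if u is a factor of x and φ(u) = 1 otherwise. Then no infinite word y in the subshift Ω(x) generated by x admits a φ-ultra monochromatic factorization. -/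
section Words

variable {A : Type*} {x : ℕ → A}

theorem exists_first_difference {a b : List A} (hlen : a.length = b.length) (hne : a ≠ b) :
    ∃ p s t a' b', s ≠ t ∧ a = p ++ s :: a' ∧ b = p ++ t :: b' := by
  induction a generalizing b with
  | nil => exact absurd (List.length_eq_zero_iff.1 hlen.symm).symm hne
  | cons s a ih =>
    obtain ⟨t, b, rfl⟩ := List.exists_cons_of_length_eq_add_one hlen.symm
    by_cases hst : s = t
    · subst hst
      obtain ⟨p, α, β, a', b', hαβ, rfl, rfl⟩ := ih (by simpa using hlen) (by simpa using hne)
      exact ⟨s :: p, α, β, a', b', hαβ, rfl, rfl⟩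
    · exact ⟨[], s, t, a, b, hst, rfl, rfl⟩

theorem exists_last_difference {a b : List A} (hlen : a.length = b.length) (hne : a ≠ b) :
    ∃ q s t a' b', s ≠ t ∧ a = a' ++ s :: q ∧ b = b' ++ t :: q := by
  obtain ⟨p, s, t, a', b', hst, ha, hb⟩ :=
    exists_first_difference (a := a.reverse) (b := b.reverse) (by simpa using hlen)
      (by simpa using hne)
  refine ⟨p.reverse, s, t, a'.reverse, b'.reverse, hst, ?_, ?_⟩
  · simpa using congrArg List.reverse ha
  · simpa using congrArg List.reverse hb

theorem append_flatten_comm {u : List A} {L : List (List A)}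
    (h : ∀ v ∈ L, u ++ v = v ++ u) : u ++ L.flatten = L.flatten ++ u := by
  induction L with
  | nil => simp
  | cons v L ih =>
    rw [List.forall_mem_cons] at h
    rw [List.flatten_cons, ← List.append_assoc, h.1, List.append_assoc, ih h.2, List.append_assoc]

theorem length_le_length_flatten {L : List (List A)} (h : ∀ u ∈ L, u ≠ []) :
    L.length ≤ L.flatten.length := by
  rw [List.length_flatten, ← List.length_map List.length]
  refine List.length_le_sum_of_one_le _ fun n hn => ?_
  obtain ⟨u, hu, rfl⟩ := List.mem_map.1 hn
  exact List.length_pos_iff.2 (h u hu)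

/-- The window of length `n` of the infinite word `x` at position `i`, that is, the finite word
`x i, …, x (i + n - 1)`. -/
def factorAt (x : ℕ → A) (i n : ℕ) : List A := (List.range n).map fun k => x (i + k)

@[simp]
theorem length_factorAt (x : ℕ → A) (i n : ℕ) : (factorAt x i n).length = n := by
  simp [factorAt]

theorem factorAt_one (x : ℕ → A) (i : ℕ) : factorAt x i 1 = [x i] := rfl

theorem factorAt_add (x : ℕ → A) (i m n : ℕ) :
    factorAt x i (m + n) = factorAt x i m ++ factorAt x (i + m) n := by
  simp [factorAt, List.range_add, Function.comp_def, add_assoc]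

theorem isFactorOf_factorAt (x : ℕ → A) (i : ℕ) {n : ℕ} (hn : n ≠ 0) :
    IsFactorOf (factorAt x i n) x :=
  ⟨List.ne_nil_of_length_pos (by simpa using Nat.pos_of_ne_zero hn), i, by
    rw [length_factorAt, factorAt]⟩

theorem IsFactorOf.of_infix {u v : List A} (hv : IsFactorOf v x) (huv : u <:+: v)
    (hu : u ≠ []) : IsFactorOf u x := by
  obtain ⟨a, b, rfl⟩ := huv
  obtain ⟨-, i, hi : a ++ u ++ b = factorAt x i _⟩ := hv
  rw [List.length_append, factorAt_add, List.length_append, factorAt_add] at hi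
  have hau := (List.append_inj hi (by simp)).1
  exact ⟨hu, i + a.length, (List.append_inj hau (by simp)).2⟩

theorem mul_le_count_factorAt [DecidableEq A] {n h : ℕ} {a : A}
    (hle : ∀ i, h ≤ (factorAt x i n).count a) (m i : ℕ) :
    m * h ≤ (factorAt x i (m * n)).count a := by
  induction m with
  | zero => simp
  | succ m ih =>
    rw [Nat.succ_mul, Nat.succ_mul, factorAt_add, List.count_append]
    exact Nat.add_le_add ih (hle _)

theorem eq_of_factorAt_perm_factorAt_succ {i n : ℕ}
    (h : (factorAt x i n).Perm (factorAt x (i + 1) n)) : x (i + n) = x i := by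
  have hslide : x i :: factorAt x (i + 1) n = factorAt x i n ++ [x (i + n)] := by
    rw [← factorAt_one x (i + n), ← factorAt_add, add_comm n, factorAt_add, factorAt_one,
      List.singleton_append]
  have hperm : List.Perm ([x (i + n)] ++ factorAt x (i + 1) n) ([x i] ++ factorAt x (i + 1) n) :=
    (h.symm.append_left _).trans (List.perm_append_comm.trans (.of_eq hslide.symm))
  exact List.singleton_perm_singleton.1 ((List.perm_append_right_iff _).1 hperm)

theorem isUltimatelyPeriodic_of_finite_not_perm {u : List A} (hu : u ≠ [])
    (hfin : {i | ¬ (factorAt x i u.length).Perm u}.Finite) : IsUltimatelyPeriodic x := by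
  obtain ⟨N, hN⟩ := hfin.bddAbove
  have hperm : ∀ i, N < i → (factorAt x i u.length).Perm u := fun i hi =>
    not_not.1 fun h => (hN h).not_gt hi
  refine ⟨N + 1, u.length, List.length_pos_iff.2 hu, fun k => ?_⟩
  exact eq_of_factorAt_perm_factorAt_succ
    ((hperm _ (by omega)).trans (hperm _ (by omega)).symm)

end Words

section Balanced

variable {x : ℕ → Bool}

theorem IsBalanced.count_le (hx : IsBalanced x) {u v : List Bool} (hu : IsFactorOf u x)
    (hv : IsFactorOf v x) (hlen : u.length = v.length) (a : Bool) :
    u.count a ≤ v.count a + 1 := by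
  have := (abs_le.1 (hx u v hu hv hlen a)).2
  omega

theorem IsBalanced.letter_eq_of_isFactorOf (hx : IsBalanced x) {w : List Bool} {γ δ : Bool}
    (hγ : IsFactorOf (γ :: (w ++ [γ])) x) (hδ : IsFactorOf (δ :: (w ++ [δ])) x) : γ = δ := by
  by_contra hne
  have hcount := hx.count_le hγ hδ (by simp) γ
  simp [Ne.symm hne] at hcount

theorem IsBalanced.eq_of_append_isFactorOf (hx : IsBalanced x) {a b c d : List Bool}
    (hab : a.length = b.length) (hcd : c.length = d.length) (hne : a ≠ b)
    (hca : IsFactorOf (c ++ a) x) (hcb : IsFactorOf (c ++ b) x)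
    (hda : IsFactorOf (d ++ a) x) (hdb : IsFactorOf (d ++ b) x) : c = d := by
  by_contra hne'
  obtain ⟨p, α, β, a', b', hαβ, rfl, rfl⟩ := exists_first_difference hab hne
  obtain ⟨q, γ, δ, c', d', hγδ, rfl, rfl⟩ := exists_last_difference hcd hne'
  have middle {s t : Bool} {e f : List Bool} (h : IsFactorOf ((e ++ s :: q) ++ (p ++ t :: f)) x) :
      IsFactorOf (s :: ((q ++ p) ++ [t])) x :=
    h.of_infix ⟨e, f, by simp⟩ (by simp)
  by_cases hγα : γ = α
  · obtain rfl : δ = β := by rw [Bool.eq_not.2 hγδ.symm, Bool.eq_not.2 hαβ.symm, hγα]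
    subst hγα
    exact hγδ (hx.letter_eq_of_isFactorOf (middle hca) (middle hdb))
  · obtain rfl : γ = β := by rw [Bool.eq_not.2 hγα, Bool.eq_not.2 hαβ.symm]
    obtain rfl : δ = α := by rw [Bool.eq_not.2 hγδ.symm, Bool.eq_not.2 hαβ]
    exact hγδ (hx.letter_eq_of_isFactorOf (middle hcb) (middle hda))

theorem IsBalanced.finite_setOf_count_lt_count_factorAt (hx : IsBalanced x) {u : List Bool}
    (hpow : ∀ n, n ≠ 0 → IsFactorOf (List.replicate n u).flatten x) (a : Bool) :
    {i | u.count a < (factorAt x i u.length).count a}.Finite := by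
  have hu : u.length ≠ 0 := by simpa using (hpow 1 one_ne_zero).1
  by_contra hinf
  obtain ⟨i, (hi : u.count a < _), j, (hj : u.count a < _), hij,
      (hmod : i ≡ j [MOD u.length])⟩ :=
    Set.Infinite.exists_lt_map_eq_of_mapsTo hinf
      (fun i _ => Nat.mod_lt i (Nat.pos_of_ne_zero hu)) (Set.finite_lt_nat u.length)
  obtain ⟨m, rfl⟩ : ∃ m, j = i + u.length + m * u.length := by
    obtain ⟨t, ht⟩ := (Nat.modEq_iff_dvd' hij.le).1 hmod
    obtain ⟨m, rfl⟩ := Nat.exists_eq_succ_of_ne_zero (n := t) (by rintro rfl; omega)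
    exact ⟨m, by rw [Nat.mul_succ, mul_comm] at ht; omega⟩
  have hle (k : ℕ) : u.count a ≤ (factorAt x k u.length).count a := by
    have := hx.count_le (isFactorOf_factorAt x i hu) (isFactorOf_factorAt x k hu) (by simp) a
    omega
  have hmiddle := mul_le_count_factorAt hle m (i + u.length)
  have hupper := hx.count_le
    (isFactorOf_factorAt x i (n := u.length + m * u.length + u.length) (by omega))
    (hpow (m + 2) (by omega)) (by simp; ring) a
  simp only [factorAt_add, List.count_append, List.count_flatten, List.map_replicate,
    List.sum_replicate, smul_eq_mul, add_mul, ← add_assoc] at hupper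
  omega

theorem IsBalanced.isUltimatelyPeriodic_of_isFactorOf_powers (hx : IsBalanced x) {u : List Bool}
    (hpow : ∀ n, n ≠ 0 → IsFactorOf (List.replicate n u).flatten x) :
    IsUltimatelyPeriodic x := by
  have hu : u ≠ [] := by simpa using (hpow 1 one_ne_zero).1
  refine isUltimatelyPeriodic_of_finite_not_perm hu <|
    (Set.finite_iUnion (hx.finite_setOf_count_lt_count_factorAt hpow)).subset fun i hi => ?_
  by_contra hcount
  simp only [Set.mem_iUnion, Set.mem_ofPred_eq, not_exists, not_lt] at hcount
  exact hi ((List.subperm_ext_iff.2 fun a _ => hcount a).perm_of_length_le (by simp))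

end Balanced

theorem IsFactorization.isFactorOf_zero {A : Type*} {x : ℕ → A} {V : ℕ → List A}
    (hV : IsFactorization x V) : IsFactorOf (V 0) x :=
  ⟨hV.1 0, 0, by simpa [IsPrefixOf, wordTake] using hV.2 1⟩

theorem IsUltraMonochromatic.exists_forall_nodup {A C : Type*} {φ : List A → C}
    {V : ℕ → List A} (hV : IsUltraMonochromatic φ V) :
    ∃ c, ∀ l : List ℕ, l ≠ [] → l.Nodup → φ (l.map V).flatten = c := by
  obtain ⟨c, hc⟩ := hV
  refine ⟨c, fun l hl hnd => ?_⟩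
  have hsort : StrictMono (l.get ∘ Tuple.sort l.get) :=
    (Tuple.monotone_sort l.get).strictMono_of_injective
      ((List.nodup_iff_injective_get.1 hnd).comp (Equiv.injective _))
  have hconcat : permConcat V (l.get ∘ Tuple.sort l.get) (Tuple.sort l.get)⁻¹ =
      (l.map V).flatten := by
    refine congrArg List.flatten (List.ext_getElem ?_ ?_) <;> simp
  rw [← hconcat]
  exact hc _ (List.length_pos_iff.2 hl) _ hsort _

theorem IsBalanced.exists_forall_append_comm {x : ℕ → Bool} (hx : IsBalanced x)
    {V : ℕ → List Bool}
    (hV : ∀ l : List ℕ, l ≠ [] → l.Nodup → IsFactorOf (l.map V).flatten x) :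
    ∃ N, ∀ k l, N ≤ k → N ≤ l → V k ++ V l = V l ++ V k := by
  by_cases hcomm : ∀ i j, V i ++ V j = V j ++ V i
  · exact ⟨0, fun k l _ _ => hcomm k l⟩
  push Not at hcomm
  obtain ⟨i, j, hne⟩ := hcomm
  refine ⟨max i j + 1, fun k l hk hl => ?_⟩
  rcases eq_or_ne k l with rfl | hkl
  · rfl
  have hij : i ≠ j := by rintro rfl; exact hne rfl
  apply hx.eq_of_append_isFactorOf (a := V i ++ V j) (b := V j ++ V i)
    (by simp [add_comm]) (by simp [add_comm]) hne
  · simpa using hV [k, l, i, j] (by simp) (by grind)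
  · simpa using hV [k, l, j, i] (by simp) (by grind)
  · simpa using hV [l, k, i, j] (by simp) (by grind)
  · simpa using hV [l, k, j, i] (by simp) (by grind)

theorem isFactorOf_power_of_forall_append_comm {A : Type*} {x : ℕ → A} {V : ℕ → List A}
    (hV : ∀ l : List ℕ, l ≠ [] → l.Nodup → IsFactorOf (l.map V).flatten x) {u : List A}
    (hu : u ≠ []) {N : ℕ} (hcomm : ∀ k, N ≤ k → u ++ V k = V k ++ u) {n : ℕ} (hn : n ≠ 0) :
    IsFactorOf (List.replicate n u).flatten x := by
  have hne : (List.replicate n u).flatten ≠ [] := by simp [hn, hu]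
  set m := (List.replicate n u).flatten.length
  have hm : m ≠ 0 := List.length_pos_iff.2 hne |>.ne'
  set q := ((List.range' N m).map V).flatten
  have hq : IsFactorOf q x := hV _ (by simpa using hm) List.nodup_range'
  have huq : u ++ q = q ++ u := append_flatten_comm <| List.forall_mem_map.2 fun k hk =>
    hcomm k (List.mem_range'_1.1 hk).1
  have hpq : q ++ (List.replicate n u).flatten = (List.replicate n u).flatten ++ q :=
    append_flatten_comm fun v hv => List.eq_of_mem_replicate hv ▸ huq.symm
  have hlen : m ≤ q.length := by
    have hblocks : ∀ v ∈ (List.range' N m).map V, v ≠ [] := List.forall_mem_map.2 fun k _ => by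
      simpa using (hV [k] (by simp) (by simp)).1
    simpa only [List.length_map, List.length_range'] using length_le_length_flatten hblocks
  have hpre : (List.replicate n u).flatten <+: q :=
    List.prefix_of_prefix_length_le (hpq ▸ List.prefix_append _ q) (List.prefix_append q _) hlen
  exact hq.of_infix hpre.isInfix hne

theorem IsSturmian.exists_nodup_not_isFactorOf {x : ℕ → Bool} (hx : IsSturmian x)
    (V : ℕ → List Bool) : ∃ l : List ℕ, l ≠ [] ∧ l.Nodup ∧ ¬ IsFactorOf (l.map V).flatten x := by
  by_contra! hV
  obtain ⟨N, hN⟩ := hx.2.exists_forall_append_comm hV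
  have hne : V N ≠ [] := by simpa using (hV [N] (by simp) (by simp)).1
  exact hx.1 <| hx.2.isUltimatelyPeriodic_of_isFactorOf_powers fun n hn =>
    isFactorOf_power_of_forall_append_comm hV hne (fun k hk => hN N k le_rfl hk) hn

theorem sturmian_no_ultra_monochromatic_in_subshift_general
    (x : ℕ → Bool) (hx : IsSturmian x) (φ : List Bool → Fin 2)
    (hφ0 : ∀ u : List Bool, IsFactorOf u x → φ u = 0)
    (hφ1 : ∀ u : List Bool, u ≠ [] → ¬ IsFactorOf u x → φ u = 1)
    (y : ℕ → Bool) (hy : ∀ u : List Bool, IsFactorOf u y → IsFactorOf u x) :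
    ¬ ∃ V : ℕ → List Bool, IsFactorization y V ∧ IsUltraMonochromatic φ V := by
  rintro ⟨V, hV, hmono⟩
  obtain ⟨c, hc⟩ := hmono.exists_forall_nodup
  obtain ⟨l, hl, hnd, hlx⟩ := hx.exists_nodup_not_isFactorOf V
  have hne : (l.map V).flatten ≠ [] := by
    obtain ⟨i, hi⟩ := List.exists_mem_of_ne_nil l hl
    exact List.flatten_ne_nil_iff.2 ⟨V i, List.mem_map_of_mem hi, hV.1 i⟩
  have hc0 : φ (V 0) = c := by simpa using hc [0] (by simp) (by simp)
  have hzero_eq_one : (0 : Fin 2) = 1 := calc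
    0 = φ (V 0) := (hφ0 _ (hy _ hV.isFactorOf_zero)).symm
    _ = φ (l.map V).flatten := hc0.trans (hc l hl hnd).symm
    _ = 1 := hφ1 _ hne hlx
  exact zero_ne_one hzero_eq_one

/-- If `x` is an `r`-power free Sturmian word and `φ` colors factors of `x`
by `0` and non-factors by `1`, then no word in the subshift `Ω(x)` generated by `x`
admits a `φ`-ultra monochromatic factorization. -/
theorem sturmian_no_ultra_monochromatic_in_subshift
    (r : ℕ) (hr : 1 ≤ r) (x : ℕ → Bool) (hx : IsSturmian x) (hpf : IsPowerFree r x)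
    (φ : List Bool → Fin 2)
    (hφ0 : ∀ u : List Bool, IsFactorOf u x → φ u = 0)
    (hφ1 : ∀ u : List Bool, u ≠ [] → ¬ IsFactorOf u x → φ u = 1)
    (y : ℕ → Bool) (hy : ∀ u : List Bool, IsFactorOf u y → IsFactorOf u x) :
    ¬ ∃ V : ℕ → List Bool, IsFactorization y V ∧ IsUltraMonochromatic φ V := by
  exact sturmian_no_ultra_monochromatic_in_subshift_general x hx φ hφ0 hφ1 y hy
end

section
/- Let A be a finite nonempty alphabet, μ the Bernoulli measure on A^ℕ (the infinite product of the uniform probability measure on A), and φ : A⁺ → C any finite coloring. Then for μ-almost all x ∈ A^ℕ there exists y ∈ Ω(x) which admits a φ-ultra monochromatic factorization. -/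
/-! Almost surely every word over the support of the letter distribution occurs in `x`: by
independence, the probability that it appears in none of the first `m` disjoint windows decays
geometrically in `m`. So every `y` over the support lies in `Ω(x)`, in particular the constant word
`a a a ⋯` for a letter `a` of positive probability. Applying Hindman's theorem to the coloring
`n ↦ φ(aⁿ)` of the positive integers gives `b₀, b₁, …` all of whose finite sums have one color, and
`V i = a ^ b i` is an ultra monochromatic factorization, because permuting powers of a single letter
does not change their concatenation. -/

open MeasureTheory

section FiniteSums

theorem pos_of_mem_FS {M : Type*} [AddMonoid M] [Preorder M] [AddLeftStrictMono M] {s : Stream' M}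
    {m : M} (hm : m ∈ Hindman.FS s) (hs : ∀ i, 0 < s.get i) : 0 < m := by
  induction hm with
  | head' s => exact hs 0
  | tail' s _ _ ih => exact ih fun i => hs (i + 1)
  | cons' s m _ ih => exact add_pos (hs 0) (ih fun i => hs (i + 1))

theorem exists_pos_seq_finsetSum_monochromatic {C : Type*} [Finite C] (f : ℕ → C) :
    ∃ (b : ℕ → ℕ) (c : C), (∀ i, 0 < b i) ∧
      ∀ s : Finset ℕ, s.Nonempty → f (∑ i ∈ s, b i) = c := by
  have hcover : Hindman.FS (Stream'.const 1) ⊆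
      ⋃₀ Set.range fun c : C => {n : ℕ | 0 < n ∧ f n = c} := fun m hm =>
    ⟨_, ⟨f m, rfl⟩, pos_of_mem_FS hm fun _ => Nat.one_pos, rfl⟩
  obtain ⟨_, ⟨c, rfl⟩, b, hb⟩ :=
    Hindman.FS_partition_regular (Stream'.const 1) _ (Set.finite_range _) hcover
  exact ⟨b.get, c, fun i => (hb (Hindman.FS.singleton b i)).1,
    fun s hs => (hb (Hindman.FS.finsetSum b s hs)).2⟩

end FiniteSums

section ConstantWord

variable {A : Type*}

theorem flatten_map_replicate (a : A) (l : List ℕ) :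
    (l.map fun n => List.replicate n a).flatten = List.replicate l.sum a := by
  induction l with
  | nil => rfl
  | cons n l ih =>
    rw [List.map_cons, List.flatten_cons, ih, List.replicate_append_replicate, List.sum_cons]

theorem isPrefixOf_replicate_const (a : A) (n : ℕ) :
    IsPrefixOf (List.replicate n a) fun _ => a := by
  simp [IsPrefixOf, wordTake]

theorem isFactorization_const_replicate (a : A) {b : ℕ → ℕ} (hb : ∀ i, 0 < b i) :
    IsFactorization (fun _ => a) fun i => List.replicate (b i) a := by
  refine ⟨fun i hi => (hb i).ne' ((List.replicate_eq_nil_iff _).1 hi), fun n => ?_⟩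
  have hconcat := flatten_map_replicate a ((List.range n).map b)
  rw [List.map_map] at hconcat
  exact hconcat ▸ isPrefixOf_replicate_const a _

theorem permConcat_replicate (a : A) (b : ℕ → ℕ) {k : ℕ} (n : Fin k ↪ ℕ)
    (σ : Equiv.Perm (Fin k)) :
    permConcat (fun i => List.replicate (b i) a) n σ =
      List.replicate (∑ i ∈ Finset.univ.map n, b i) a := by
  calc permConcat (fun i => List.replicate (b i) a) n σ
      = ((List.ofFn fun t => b (n (σ t))).map fun m => List.replicate m a).flatten := by
        rw [List.map_ofFn]; rfl
    _ = List.replicate (∑ t, b (n (σ t))) a := by rw [flatten_map_replicate, List.sum_ofFn]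
    _ = List.replicate (∑ i ∈ Finset.univ.map n, b i) a := by
        rw [Equiv.sum_comp σ fun t => b (n t), Finset.sum_map]

theorem exists_isUltraMonochromatic_const {C : Type*} [Finite C] (φ : List A → C) (a : A) :
    ∃ V : ℕ → List A, IsFactorization (fun _ => a) V ∧ IsUltraMonochromatic φ V := by
  obtain ⟨b, c, hb, hc⟩ :=
    exists_pos_seq_finsetSum_monochromatic fun n => φ (List.replicate n a)
  refine ⟨_, isFactorization_const_replicate a hb, c, fun k hk n hn σ => ?_⟩
  have : Nonempty (Fin k) := Fin.pos_iff_nonempty.1 hk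
  rw [← hc _ (Finset.univ_nonempty.map (f := ⟨n, hn.injective⟩)), ← permConcat_replicate a b _ σ]
  rfl

end ConstantWord

section LetterDistribution

variable {A ι : Type*} [Fintype A] [Fintype ι] [DecidableEq ι]

theorem sum_prod_pmf_eq_one (p : PMF A) : ∑ v : ι → A, ∏ i, p (v i) = 1 := by
  rw [← Fintype.prod_sum fun (_ : ι) a => p a, ← tsum_fintype (L := .unconditional _), p.tsum_coe,
    Finset.prod_const_one]

theorem sum_erase_prod_pmf_lt_one [DecidableEq A] {p : PMF A} {w : ι → A}
    (hw : ∀ i, w i ∈ p.support) :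
    ∑ v ∈ Finset.univ.erase w, ∏ i, p (v i) < 1 := by
  have hsplit := Finset.sum_erase_add Finset.univ (fun v : ι → A => ∏ i, p (v i))
    (Finset.mem_univ w)
  rw [sum_prod_pmf_eq_one] at hsplit
  have hne_top : ∑ v ∈ Finset.univ.erase w, ∏ i, p (v i) ≠ ⊤ := fun h => by simp [h] at hsplit
  have hprod : ∏ i, p (w i) ≠ 0 := Finset.prod_ne_zero_iff.2 fun i _ => hw i
  exact hsplit ▸ ENNReal.lt_add_right hne_top hprod

end LetterDistribution

/-- The subshift `Ω(x)` generated by the infinite word `x`: the infinite words all of whose factors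
are factors of `x`. -/
def subshift {A : Type*} (x : ℕ → A) : Set (ℕ → A) :=
  {y | ∀ u, IsFactorOf u y → IsFactorOf u x}

/-- `μ` is the Bernoulli measure on infinite words with letter distribution `p`, characterized by
its values on cylinder sets. -/
def IsBernoulli {A : Type*} [MeasurableSpace A] (p : PMF A) (μ : Measure (ℕ → A)) : Prop :=
  ∀ (n : ℕ) (a : Fin n → A), μ {x | ∀ i : Fin n, x i = a i} = ∏ i, p (a i)

namespace IsBernoulli

variable {A : Type*} [MeasurableSpace A] {p : PMF A} {μ : Measure (ℕ → A)}

theorem measure_setOf_blocks_eq (hμ : IsBernoulli p μ) {m n : ℕ} (v : Fin m → Fin n → A) :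
    μ {x | ∀ (j : Fin m) (k : Fin n), x (k + n * j) = v j k} = ∏ j, ∏ k, p (v j k) := by
  let e : Fin m × Fin n ≃ Fin (m * n) := finProdFinEquiv
  have hset : {x : ℕ → A | ∀ (j : Fin m) (k : Fin n), x (k + n * j) = v j k} =
      {x | ∀ i : Fin (m * n), x i = v (e.symm i).1 (e.symm i).2} := by
    ext x
    simp only [Set.mem_ofPred_eq, ← e.forall_congr_right, Prod.forall, Equiv.symm_apply_apply]
    rfl
  rw [hset, hμ, ← Fintype.prod_prod_type', ← e.prod_comp]
  simp only [Equiv.symm_apply_apply]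

theorem measure_setOf_forall_block_ne_le [Fintype A] [DecidableEq A] (hμ : IsBernoulli p μ)
    {n : ℕ} (w : Fin n → A) (m : ℕ) :
    μ {x | ∀ j : Fin m, (fun k : Fin n => x (k + n * j)) ≠ w} ≤
      (∑ v ∈ Finset.univ.erase w, ∏ k, p (v k)) ^ m := by
  let S : Finset (Fin n → A) := Finset.univ.erase w
  have hcover : {x : ℕ → A | ∀ j : Fin m, (fun k : Fin n => x (k + n * j)) ≠ w} ⊆
      ⋃ v ∈ Fintype.piFinset fun _ : Fin m => S,
        {x | ∀ (j : Fin m) (k : Fin n), x (k + n * j) = v j k} := fun x hx =>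
    Set.mem_biUnion (x := fun (j : Fin m) (k : Fin n) => x (k + n * j))
      (by simpa [S] using hx) fun _ _ => rfl
  calc μ {x | ∀ j : Fin m, (fun k : Fin n => x (k + n * j)) ≠ w}
      ≤ ∑ v ∈ Fintype.piFinset fun _ => S,
          μ {x | ∀ (j : Fin m) (k : Fin n), x (k + n * j) = v j k} :=
        (measure_mono hcover).trans (measure_biUnion_finset_le _ _)
    _ = ∑ v ∈ Fintype.piFinset fun _ => S, ∏ j, ∏ k, p (v j k) :=
        Finset.sum_congr rfl fun v _ => hμ.measure_setOf_blocks_eq v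
    _ = (∑ v ∈ S, ∏ k, p (v k)) ^ m := (S.sum_pow' (fun v => ∏ k, p (v k)) m).symm

theorem ae_exists_block_eq [Finite A] (hμ : IsBernoulli p μ) {n : ℕ} {w : Fin n → A}
    (hw : ∀ k, w k ∈ p.support) :
    ∀ᵐ x ∂μ, ∃ j : ℕ, (fun k : Fin n => x (k + n * j)) = w := by
  classical
  cases nonempty_fintype A
  have hsub (m : ℕ) : {x : ℕ → A | ¬∃ j : ℕ, (fun k : Fin n => x (k + n * j)) = w} ⊆
      {x | ∀ j : Fin m, (fun k : Fin n => x (k + n * j)) ≠ w} :=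
    fun _ hx j hj => hx ⟨j, hj⟩
  have hbound (m : ℕ) := (measure_mono (hsub m)).trans (hμ.measure_setOf_forall_block_ne_le w m)
  exact ae_iff.2 <| le_bot_iff.1 <| ge_of_tendsto'
    (ENNReal.tendsto_pow_atTop_nhds_zero_of_lt_one (sum_erase_prod_pmf_lt_one hw)) hbound

theorem ae_isFactorOf [Finite A] (hμ : IsBernoulli p μ) {u : List A} (hne : u ≠ [])
    (hu : ∀ a ∈ u, a ∈ p.support) : ∀ᵐ x ∂μ, IsFactorOf u x := by
  filter_upwards [hμ.ae_exists_block_eq (w := u.get) fun k => hu _ (u.get_mem k)] with x hx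
  obtain ⟨j, hj⟩ := hx
  refine ⟨hne, u.length * j, List.ext_getElem (by simp) fun k hk _ => ?_⟩
  simpa [add_comm] using (congrFun hj ⟨k, hk⟩).symm

theorem ae_mem_subshift [Finite A] (hμ : IsBernoulli p μ) {y : ℕ → A} (hy : ∀ i, y i ∈ p.support) :
    ∀ᵐ x ∂μ, y ∈ subshift x := by
  refine ae_all_iff.2 fun u => Filter.eventually_imp_distrib_left.2 fun ⟨hne, i, hi⟩ =>
    hμ.ae_isFactorOf hne fun a ha => ?_
  rw [hi] at ha
  obtain ⟨k, -, rfl⟩ := List.mem_map.1 ha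
  exact hy (i + k)

end IsBernoulli

theorem almost_all_subshift_has_ultra_monochromatic_general
    {A : Type*} [Finite A] [MeasurableSpace A] {C : Type*} [Finite C] (φ : List A → C)
    (p : PMF A) (μ : Measure (ℕ → A)) (hμ : IsBernoulli p μ) :
    ∀ᵐ x ∂μ, ∃ y ∈ subshift x,
      ∃ V : ℕ → List A, IsFactorization y V ∧ IsUltraMonochromatic φ V := by
  obtain ⟨a, ha⟩ := p.support_nonempty
  obtain ⟨V, hV⟩ := exists_isUltraMonochromatic_const φ a
  filter_upwards [hμ.ae_mem_subshift (y := fun _ => a) fun _ => ha] with x hx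
  exact ⟨_, hx, V, hV⟩

open MeasureTheory in
/-- Let `A` be a finite nonempty alphabet and `μ` the Bernoulli measure on
`A^ℕ` (the infinite product of the uniform probability measure on `A`, characterized here
by its values on cylinder sets). Then for `μ`-almost all `x`, some `y` in the subshift
`Ω(x)` generated by `x` admits a `φ`-ultra monochromatic factorization. -/
theorem almost_all_subshift_has_ultra_monochromatic
    {A : Type} [Fintype A] [Nonempty A] [MeasurableSpace A] [DiscreteMeasurableSpace A]
    {C : Type*} [Fintype C] [Nonempty C] (φ : List A → C)
    (μ : Measure (ℕ → A))
    (hμ : ∀ (n : ℕ) (a : Fin n → A),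
      μ {x : ℕ → A | ∀ i : Fin n, x i = a i} = (1 / (Fintype.card A : ENNReal)) ^ n) :
    ∀ᵐ x ∂μ, ∃ y : ℕ → A, (∀ u : List A, IsFactorOf u y → IsFactorOf u x) ∧
      ∃ V : ℕ → List A, IsFactorization y V ∧ IsUltraMonochromatic φ V :=
  almost_all_subshift_has_ultra_monochromatic_general φ (PMF.uniformOfFintype A) μ fun n a => by
    simp [hμ]
end

section
/- Let x be an infinite word over A that is not purely periodic, and define φ : A⁺ → {0,1} by φ(u) = 0 if u is a prefix of x and φ(u) = 1 otherwise. Then x does not admit a φ-sequentially monochromatic factorization. -/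
/-! The color of a sequentially monochromatic factorization `V 0, V 1, …` of `x` is that of the
prefix `V 0`, so every `V 1 ++ ⋯ ++ V (1 + j)` is a prefix of `x`, and so is
`V 0 ++ V 1 ++ ⋯ ++ V (1 + j)`. As `j` grows, these two families of prefixes show that deleting the
first block `V 0` from `x` leaves `x` unchanged, i.e. `x = (V 0)^ω`. -/

section

variable {A C : Type*} {x : ℕ → A} {u : List A} {V : ℕ → List A}

theorem IsPrefixOf.getElem_eq (h : IsPrefixOf u x) {k : ℕ} (hk : k < u.length) : u[k] = x k :=
  calc u[k] = (wordTake x u.length)[k]'(by simpa [wordTake] using hk) := List.getElem_of_eq h hk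
    _ = x k := by simp [wordTake]

theorem periodic_of_isPrefixOf_append
    (h : ∀ n, ∃ w : List A, n < w.length ∧ IsPrefixOf w x ∧ IsPrefixOf (u ++ w) x) :
    Function.Periodic x u.length := by
  intro k
  obtain ⟨w, hk, hw, huw⟩ := h k
  have hlt : k + u.length < (u ++ w).length := by rw [List.length_append]; omega
  calc x (k + u.length) = (u ++ w)[k + u.length] := (huw.getElem_eq hlt).symm
    _ = w[k] := by simp [List.getElem_append_right]
    _ = x k := hw.getElem_eq hk

theorem blockConcat_zero (V : ℕ → List A) (i : ℕ) : blockConcat V i 0 = V i := by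
  simp [blockConcat]

theorem blockConcat_succ (V : ℕ → List A) (i j : ℕ) :
    blockConcat V i (j + 1) = V i ++ blockConcat V (i + 1) j := by
  simp [blockConcat, List.range_succ_eq_map (n := j + 1), Function.comp_def, Nat.add_right_comm,
    Nat.add_assoc]

theorem lt_length_blockConcat (hV : ∀ i, V i ≠ []) (i j : ℕ) : j < (blockConcat V i j).length := by
  induction j generalizing i with
  | zero => simpa only [blockConcat_zero] using List.length_pos_iff.mpr (hV i)
  | succ j ih =>
    have hVi : 0 < (V i).length := List.length_pos_iff.mpr (hV i)
    have hrest : j < (blockConcat V (i + 1) j).length := ih (i + 1)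
    rw [blockConcat_succ, List.length_append]
    omega

theorem blockConcat_ne_nil (hV : ∀ i, V i ≠ []) (i j : ℕ) : blockConcat V i j ≠ [] :=
  List.ne_nil_of_length_pos (Nat.zero_lt_of_lt (lt_length_blockConcat hV i j))

namespace IsFactorization

theorem isPrefixOf_blockConcat_zero (hV : IsFactorization x V) (j : ℕ) :
    IsPrefixOf (blockConcat V 0 j) x := by
  simpa only [blockConcat, Nat.zero_add] using hV.2 (j + 1)

theorem periodic_of_isPrefixOf_blockConcat_one (hV : IsFactorization x V)
    (h : ∀ j, IsPrefixOf (blockConcat V 1 j) x) : Function.Periodic x (V 0).length :=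
  periodic_of_isPrefixOf_append fun n =>
    ⟨blockConcat V 1 n, lt_length_blockConcat hV.1 1 n, h n,
      blockConcat_succ V 0 n ▸ hV.isPrefixOf_blockConcat_zero (n + 1)⟩

end IsFactorization

theorem not_periodic_no_seq_monochromatic_general
    (hx : ¬ ∃ p : ℕ, 0 < p ∧ Function.Periodic x p) (φ : List A → C)
    (hφ : ∀ u v : List A, u ≠ [] → v ≠ [] → IsPrefixOf u x → ¬ IsPrefixOf v x → φ u ≠ φ v) :
    ¬ ∃ V : ℕ → List A, IsFactorization x V ∧ IsSeqMonochromatic φ V := by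
  rintro ⟨V, hV, c, hc⟩
  have hprefix (j : ℕ) : IsPrefixOf (blockConcat V 1 j) x := by
    by_contra hj
    exact hφ _ _ (blockConcat_ne_nil hV.1 0 0) (blockConcat_ne_nil hV.1 1 j)
      (hV.isPrefixOf_blockConcat_zero 0) hj ((hc 0 0).trans (hc 1 j).symm)
  exact hx ⟨(V 0).length, List.length_pos_iff.mpr (hV.1 0),
    hV.periodic_of_isPrefixOf_blockConcat_one hprefix⟩

end

/-- If `x` is not purely periodic and `φ` colors prefixes of `x` by `0`
and all other nonempty words by `1`, then `x` admits no `φ`-sequentially monochromatic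
factorization. -/
theorem not_periodic_no_seq_monochromatic
    {A : Type*} (x : ℕ → A)
    (hx : ¬ ∃ p : ℕ, 0 < p ∧ ∀ k : ℕ, x (k + p) = x k)
    (φ : List A → Fin 2)
    (hφ0 : ∀ u : List A, u ≠ [] → IsPrefixOf u x → φ u = 0)
    (hφ1 : ∀ u : List A, u ≠ [] → ¬ IsPrefixOf u x → φ u = 1) :
    ¬ ∃ V : ℕ → List A, IsFactorization x V ∧ IsSeqMonochromatic φ V := by
  exact not_periodic_no_seq_monochromatic_general hx φ fun u v hu hv hux hvx => by
    simp only [hφ0 u hu hux, hφ1 v hv hvx, ne_eq, zero_ne_one, not_false_eq_true]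
end

section
/- Let x ∈ {0,1}^ℕ be the infinite word x = 010110111011110⋯, the concatenation of the blocks 01ⁿ (a 0 followed by n 1's) for n = 1, 2, 3, …. Define φ : {0,1}⁺ → {0,1} by φ(u) = 0 if u is a factor of x and φ(u) = 1 otherwise. Then no suffix of x admits a φ-ultra monochromatic factorization. -/
open scoped Classical in
/-- The infinite word `x = 010110111011110⋯`, the concatenation of the blocks `01ⁿ` for
`n = 1, 2, 3, …` (`false` codes 0, `true` codes 1): position `m` carries the letter `0`
exactly when `m = k(k+3)/2` for some `k ≥ 0`. -/
noncomputable def wordX (m : ℕ) : Bool :=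
  if ∃ k : ℕ, 2 * m = k * (k + 3) then false else true

/-!
The prefix of the suffix `Tⁿ(x)` that reaches past two consecutive zeros contains a word `01ᵏ0`, and
the gaps between zeros of `x` strictly increase, so this prefix occurs in `x` at position `n` only.
Group enough blocks to cover it into `W`, and more than `n` further blocks into `U`. Then `W` is a
factor of `x`, but `UW` is not, since it would put an occurrence of `W` beyond position `n`; yet
both are permuted concatenations of blocks.
-/

section Words

variable {A C : Type*} {x y : ℕ → A} {u v : List A} {V : ℕ → List A} {φ : List A → C} {n : ℕ}

theorem isFactorOf_iff : IsFactorOf u x ↔ u ≠ [] ∧ ∃ i, IsPrefixOf u (fun k => x (i + k)) :=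
  Iff.rfl

theorem isPrefixOf_iff_getElem : IsPrefixOf u x ↔ ∀ k (hk : k < u.length), u[k] = x k := by
  simp [IsPrefixOf, wordTake, List.ext_getElem_iff]

theorem IsPrefixOf.apply_eq (hx : IsPrefixOf u x) (hy : IsPrefixOf u y) {k : ℕ}
    (hk : k < u.length) : x k = y k :=
  (isPrefixOf_iff_getElem.1 hx k hk).symm.trans (isPrefixOf_iff_getElem.1 hy k hk)

theorem IsPrefixOf.of_append_right (h : IsPrefixOf (u ++ v) x) :
    IsPrefixOf v (fun k => x (u.length + k)) := by
  rw [isPrefixOf_iff_getElem] at h ⊢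
  intro k hk
  rw [← h (u.length + k) (by simpa using hk)]
  simp

theorem IsFactorization.isPrefixOf_flatMap_range (h : IsFactorization x V) (m : ℕ) :
    IsPrefixOf ((List.range m).flatMap V) x :=
  h.2 m

theorem length_le_length_flatMap (hV : ∀ i, V i ≠ []) (l : List ℕ) :
    l.length ≤ (l.flatMap V).length := by
  have one_le_length : ∀ a ∈ l.map fun i => (V i).length, 1 ≤ a := by
    simpa [Nat.one_le_iff_ne_zero] using fun i _ => hV i
  simpa [List.length_flatMap] using List.length_le_sum_of_one_le _ one_le_length

theorem exists_permConcat_eq_flatMap (V : ℕ → List A) {l : List ℕ} (hl : l.Nodup) :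
    ∃ (m : Fin l.length → ℕ) (σ : Equiv.Perm (Fin l.length)),
      StrictMono m ∧ permConcat V m σ = l.flatMap V := by
  let sorted := l.toFinset.orderIsoOfFin (List.toFinset_card_of_nodup hl)
  let σ : Equiv.Perm (Fin l.length) :=
    (hl.getEquiv l).trans
      ((Equiv.subtypeEquivRight fun _ => List.mem_toFinset.symm).trans sorted.symm.toEquiv)
  refine ⟨fun t => sorted t, σ, fun _ _ h => sorted.strictMono h, ?_⟩
  have sorted_σ (t : Fin l.length) : (sorted (σ t) : ℕ) = l.get t := by simp [σ]
  simp only [permConcat, sorted_σ, List.get_eq_getElem, List.ofFn_getElem_eq_map,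
    List.flatMap_def]

theorem IsUltraMonochromatic.flatMap_eq_flatMap (h : IsUltraMonochromatic φ V) {l l' : List ℕ}
    (hl : l.Nodup) (hl_ne : l ≠ []) (hl' : l'.Nodup) (hl'_ne : l' ≠ []) :
    φ (l.flatMap V) = φ (l'.flatMap V) := by
  obtain ⟨c, hc⟩ := h
  have color_eq {l : List ℕ} (hl : l.Nodup) (hl_ne : l ≠ []) : φ (l.flatMap V) = c := by
    obtain ⟨m, σ, hm, hσ⟩ := exists_permConcat_eq_flatMap V hl
    exact hσ ▸ hc l.length (List.length_pos_iff.2 hl_ne) m hm σ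
  rw [color_eq hl hl_ne, color_eq hl' hl'_ne]

theorem not_isFactorOf_append_of_bounded_occurrences {L B : ℕ}
    (hx : ∀ i, (∀ k < L, x (i + k) = x (n + k)) → i ≤ B)
    (hv : IsPrefixOf v (fun k => x (n + k))) (hL : L ≤ v.length) (hB : B < u.length) :
    ¬ IsFactorOf (u ++ v) x := by
  rw [isFactorOf_iff]
  rintro ⟨-, i, hi⟩
  have occurs_late : i + u.length ≤ B := hx _ fun k hk => by
    simpa only [add_assoc] using hi.of_append_right.apply_eq hv (hk.trans_le hL)
  omega

theorem not_isUltraMonochromatic_of_bounded_occurrences {L B : ℕ}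
    (hφ : ∀ u v, IsFactorOf u x → v ≠ [] → ¬ IsFactorOf v x → φ u ≠ φ v)
    (hx : ∀ i, (∀ k < L, x (i + k) = x (n + k)) → i ≤ B)
    (hV : IsFactorization (fun k => x (n + k)) V) : ¬ IsUltraMonochromatic φ V := by
  intro hmono
  let early := List.range (L + 1)
  let late := List.range' (L + 1) (B + 1)
  have length_early : L + 1 ≤ (early.flatMap V).length := by
    simpa [early] using length_le_length_flatMap hV.1 early
  have length_late : B + 1 ≤ (late.flatMap V).length := by
    simpa [late] using length_le_length_flatMap hV.1 late
  have early_ne : early.flatMap V ≠ [] := List.ne_nil_of_length_pos (by omega)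
  have early_prefix : IsPrefixOf (early.flatMap V) (fun k => x (n + k)) :=
    hV.isPrefixOf_flatMap_range _
  have early_factor : IsFactorOf (early.flatMap V) x :=
    isFactorOf_iff.2 ⟨early_ne, n, early_prefix⟩
  have late_early_not_factor : ¬ IsFactorOf (late.flatMap V ++ early.flatMap V) x :=
    not_isFactorOf_append_of_bounded_occurrences hx early_prefix (by omega) (by omega)
  have nodup_late_early : (late ++ early).Nodup :=
    List.nodup_append.2 ⟨List.nodup_range', List.nodup_range, by
      simp only [late, early, List.mem_range'_1, List.mem_range]
      omega⟩
  have same_color : φ (early.flatMap V) = φ (late.flatMap V ++ early.flatMap V) := by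
    rw [← List.flatMap_append]
    exact hmono.flatMap_eq_flatMap List.nodup_range (by simp [early]) nodup_late_early
      (by simp [early])
  exact hφ _ _ early_factor (by simp [early_ne]) late_early_not_factor same_color

end Words

/-- The position of the zero of `wordX` that opens its block `01ᵏ⁺¹`. It is defined by recursion on
`k`, adding the length `k + 2` of that block, rather than by the closed form `k * (k + 3) / 2`. -/
def zeroPos : ℕ → ℕ
  | 0 => 0
  | k + 1 => zeroPos k + (k + 2)

theorem zeroPos_succ (k : ℕ) : zeroPos (k + 1) = zeroPos k + (k + 2) := rfl

theorem two_mul_zeroPos (k : ℕ) : 2 * zeroPos k = k * (k + 3) := by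
  induction k with
  | zero => rfl
  | succ k ih => rw [zeroPos_succ, mul_add, ih]; ring

theorem zeroPos_strictMono : StrictMono zeroPos :=
  strictMono_nat_of_lt_succ fun k => by rw [zeroPos_succ]; omega

theorem wordX_eq_false_iff {m : ℕ} : wordX m = false ↔ ∃ k, zeroPos k = m := by
  have two_mul_eq_iff (k : ℕ) : 2 * m = k * (k + 3) ↔ zeroPos k = m := by
    rw [← two_mul_zeroPos]; omega
  simp [wordX, two_mul_eq_iff]

theorem wordX_zeroPos (k : ℕ) : wordX (zeroPos k) = false :=
  wordX_eq_false_iff.2 ⟨k, rfl⟩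

theorem eq_zero_of_wordX_zeroPos_add {k d : ℕ} (h : wordX (zeroPos k + d) = false)
    (h_succ : wordX (zeroPos (k + 1) + d) = false) : d = 0 := by
  obtain ⟨p, hp⟩ := wordX_eq_false_iff.1 h
  obtain ⟨q, hq⟩ := wordX_eq_false_iff.1 h_succ
  rw [zeroPos_succ] at hq
  have p_lt_q : p < q := zeroPos_strictMono.lt_iff_lt.1 (by omega)
  have next_zero_le : zeroPos p + (p + 2) ≤ zeroPos q := zeroPos_strictMono.monotone p_lt_q
  have p_le_k : p ≤ k := by omega
  have zeroPos_p_le : zeroPos p ≤ zeroPos k := zeroPos_strictMono.monotone p_le_k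
  omega

theorem le_of_forall_wordX_add_eq {n i : ℕ}
    (h : ∀ k < zeroPos (n + 1) + 1, wordX (i + k) = wordX (n + k)) : i ≤ n := by
  by_contra! n_lt_i
  have wordX_shift {m : ℕ} (hnm : n ≤ m) (hm : m ≤ zeroPos (n + 1)) :
      wordX (m + (i - n)) = wordX m := by
    convert h (m - n) (by omega) using 2 <;> omega
  have n_le : n ≤ zeroPos n := zeroPos_strictMono.le_apply
  have le_succ : zeroPos n ≤ zeroPos (n + 1) := zeroPos_strictMono.monotone n.le_succ
  have shift_eq_zero : i - n = 0 :=
    eq_zero_of_wordX_zeroPos_add ((wordX_shift n_le le_succ).trans (wordX_zeroPos n))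
      ((wordX_shift (n_le.trans le_succ) le_rfl).trans (wordX_zeroPos (n + 1)))
  omega

/-- For `x = 010110111011110⋯` and `φ` coloring factors of `x` by `0` and
non-factors by `1`, no suffix of `x` admits a `φ`-ultra monochromatic factorization. -/
theorem wordX_no_suffix_ultra_monochromatic
    (φ : List Bool → Fin 2)
    (hφ0 : ∀ u : List Bool, IsFactorOf u wordX → φ u = 0)
    (hφ1 : ∀ u : List Bool, u ≠ [] → ¬ IsFactorOf u wordX → φ u = 1) :
    ∀ n : ℕ, ¬ ∃ V : ℕ → List Bool,
      IsFactorization (fun m => wordX (n + m)) V ∧ IsUltraMonochromatic φ V := by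
  have color_ne (u v : List Bool) (hu : IsFactorOf u wordX) (hv : v ≠ [])
      (hv' : ¬ IsFactorOf v wordX) : φ u ≠ φ v := by
    rw [hφ0 u hu, hφ1 v hv hv']
    exact zero_ne_one
  rintro n ⟨V, hV, hmono⟩
  exact not_isUltraMonochromatic_of_bounded_occurrences color_ne
    (fun _ => le_of_forall_wordX_add_eq) hV hmono
end
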